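/- Let H ∈ (1/2, 1), q > 0, r > 0, b₁ ∈ ℝ and b₂ ≠ 0, and define L(K) = Γ(2H+1)·(q + r K²) / (2·(-(b₁ + b₂ K))^{2H}) for K in the stabilizing set {K ∈ ℝ : b₁ + b₂ K < 0}, where Γ is the Gamma function. Then the number K̂ = -(b₁ + √(b₁² + 4H(1-H)·b₂²·q/r)) / (2·b₂·(1-H)) satisfies b₁ + b₂ K̂ < 0, and K̂ is a global minimizer of L over the stabilizing set, with minimal value L(K̂) = Γ(2H+1)·(q + r K̂²) / (2·(-(b₁ + b₂ K̂))^{2H}). -/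

import Mathlib

/-!
In terms of the closed-loop decay rate `x = -(b₁ + b₂ K) > 0`, the cost is a positive multiple of
`N x / x ^ (2H)` for a positive quadratic `N`, and the equation for a critical point of this
quotient is the quadratic equation solved by the optimal gain. That the critical point `s` is a
global minimum follows from Bernoulli's inequality, applied to `t = x / s`: if `2H ≤ 1`, then
`t ^ (2H)` lies below its tangent line at `1`, and if `2H ≥ 1`, then `t ^ (2H - 1)` does. In either
case the quadratic in `t` that is left over is a nonnegative multiple of `(t - 1) ^ 2`.
-/

open Set

section QuadraticDivRpow

variable {a c₀ c₁ c₂ : ℝ}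

lemma rpow_le_one_add_mul_sub_one {p t : ℝ} (hp₀ : 0 ≤ p) (hp₁ : p ≤ 1) (ht : 0 ≤ t) :
    t ^ p ≤ 1 + p * (t - 1) := by
  simpa only [add_sub_cancel] using
    rpow_one_add_le_one_add_mul_self (s := t - 1) (by linarith) hp₀ hp₁

lemma mul_rpow_le_quadratic_of_tangent {t : ℝ} (ha₀ : 0 ≤ a) (ha₂ : a ≤ 2)
    (hc₀ : 0 ≤ c₀) (hc₂ : 0 ≤ c₂) (hsum : 0 ≤ c₀ + c₁ + c₂)
    (htangent : c₁ + 2 * c₂ = a * (c₀ + c₁ + c₂)) (ht : 0 ≤ t) :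
    (c₀ + c₁ + c₂) * t ^ a ≤ c₀ + c₁ * t + c₂ * t ^ 2 := by
  rcases le_total a 1 with ha₁ | ha₁
  · calc (c₀ + c₁ + c₂) * t ^ a
        ≤ (c₀ + c₁ + c₂) * (1 + a * (t - 1)) := by
          gcongr
          exact rpow_le_one_add_mul_sub_one ha₀ ha₁ ht
      _ = c₀ + c₁ * t + c₂ * t ^ 2 - c₂ * (t - 1) ^ 2 := by
          linear_combination (1 - t) * htangent
      _ ≤ c₀ + c₁ * t + c₂ * t ^ 2 := sub_le_self _ (by positivity)
  · have hsplit : t ^ a = t * t ^ (a - 1) := by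
      rw [← Real.rpow_one_add' ht (by linarith), add_sub_cancel]
    calc (c₀ + c₁ + c₂) * t ^ a
        ≤ (c₀ + c₁ + c₂) * (t * (1 + (a - 1) * (t - 1))) := by
          rw [hsplit]
          gcongr
          exact rpow_le_one_add_mul_sub_one (by linarith) (by linarith) ht
      _ = c₀ + c₁ * t + c₂ * t ^ 2 - c₀ * (t - 1) ^ 2 := by
          linear_combination t * (1 - t) * htangent
      _ ≤ c₀ + c₁ * t + c₂ * t ^ 2 := sub_le_self _ (by positivity)

lemma isMinOn_quadratic_div_rpow {s : ℝ} (ha₀ : 0 ≤ a) (ha₂ : a ≤ 2)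
    (hc₀ : 0 ≤ c₀) (hc₂ : 0 ≤ c₂) (hs : 0 < s) (hnonneg : 0 ≤ c₀ + c₁ * s + c₂ * s ^ 2)
    (hcrit : s * (c₁ + 2 * c₂ * s) = a * (c₀ + c₁ * s + c₂ * s ^ 2)) :
    IsMinOn (fun x : ℝ => (c₀ + c₁ * x + c₂ * x ^ 2) / x ^ a) (Ioi 0) s := by
  intro x (hx : 0 < x)
  change (c₀ + c₁ * s + c₂ * s ^ 2) / s ^ a ≤ (c₀ + c₁ * x + c₂ * x ^ 2) / x ^ a
  have hscaled : (c₀ + c₁ * s + c₂ * s ^ 2) * (x / s) ^ a ≤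
      c₀ + c₁ * s * (x / s) + c₂ * s ^ 2 * (x / s) ^ 2 :=
    mul_rpow_le_quadratic_of_tangent ha₀ ha₂ hc₀ (by positivity) hnonneg
      (by linear_combination hcrit) (by positivity)
  rw [le_div_iff₀ (by positivity)]
  calc (c₀ + c₁ * s + c₂ * s ^ 2) / s ^ a * x ^ a
      = (c₀ + c₁ * s + c₂ * s ^ 2) * (x / s) ^ a := by
        rw [Real.div_rpow hx.le hs.le, div_mul_eq_mul_div, mul_div_assoc]
    _ ≤ c₀ + c₁ * s * (x / s) + c₂ * s ^ 2 * (x / s) ^ 2 := hscaled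
    _ = c₀ + c₁ * x + c₂ * x ^ 2 := by field_simp

end QuadraticDivRpow

/-- The long-run average cost of the linear feedback `u = K x` for the scalar state equation with
drift `b₁ x + b₂ u` and running cost `q x² + r u²`, driven by a noise with the covariance of a
fractional Brownian motion of Hurst parameter `H`, such as the Rosenblatt process if `1 / 2 < H`.
It is meaningful only for stabilizing gains, those with `b₁ + b₂ K < 0`. -/
noncomputable def ergodicCost (H q r b₁ b₂ K : ℝ) : ℝ :=
  Real.Gamma (2 * H + 1) * (q + r * K ^ 2) / (2 * (-(b₁ + b₂ * K)) ^ (2 * H))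

/-- The explicit feedback gain `K̂` that minimizes `ergodicCost` over the stabilizing gains. -/
noncomputable def optimalGain (H q r b₁ b₂ : ℝ) : ℝ :=
  -(b₁ + √(b₁ ^ 2 + 4 * H * (1 - H) * b₂ ^ 2 * q / r)) / (2 * b₂ * (1 - H))

section OptimalGain

variable {H q r b₁ b₂ : ℝ}

lemma ergodicCost_eq_mul_quadratic_div_rpow (hb₂ : b₂ ≠ 0) (K : ℝ) :
    ergodicCost H q r b₁ b₂ K = Real.Gamma (2 * H + 1) / (2 * b₂ ^ 2) *
      ((b₂ ^ 2 * q + r * b₁ ^ 2 + 2 * r * b₁ * -(b₁ + b₂ * K) + r * (-(b₁ + b₂ * K)) ^ 2) /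
        (-(b₁ + b₂ * K)) ^ (2 * H)) := by
  have hquadratic : b₂ ^ 2 * q + r * b₁ ^ 2 + 2 * r * b₁ * -(b₁ + b₂ * K) +
      r * (-(b₁ + b₂ * K)) ^ 2 = b₂ ^ 2 * (q + r * K ^ 2) := by ring
  rw [hquadratic, ergodicCost, div_mul_div_comm, mul_left_comm, mul_comm 2 (b₂ ^ 2), mul_assoc,
    mul_div_mul_left _ _ (pow_ne_zero 2 hb₂)]

lemma two_mul_one_sub_mul_optimalGain (hH₁ : H ≠ 1) (hb₂ : b₂ ≠ 0) :
    2 * (1 - H) * (b₂ * optimalGain H q r b₁ b₂) =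
      -(b₁ + √(b₁ ^ 2 + 4 * H * (1 - H) * b₂ ^ 2 * q / r)) := by
  have h1H : 1 - H ≠ 0 := sub_ne_zero.mpr hH₁.symm
  rw [optimalGain]
  field_simp

lemma optimalGain_stabilizing (hH₀ : 0 < H) (hH₁ : H < 1) (hq : 0 < q) (hr : 0 < r)
    (hb₂ : b₂ ≠ 0) : b₁ + b₂ * optimalGain H q r b₁ b₂ < 0 := by
  have : 0 < 1 - H := sub_pos.mpr hH₁
  have hsqrt : (1 - 2 * H) * b₁ < √(b₁ ^ 2 + 4 * H * (1 - H) * b₂ ^ 2 * q / r) := by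
    apply Real.lt_sqrt_of_sq_lt
    have hgap : 0 < 4 * H * (1 - H) * b₂ ^ 2 * q / r + 4 * H * (1 - H) * b₁ ^ 2 := by positivity
    linear_combination hgap
  refine neg_of_mul_neg_right (a := 2 * (1 - H)) ?_ (by positivity)
  calc 2 * (1 - H) * (b₁ + b₂ * optimalGain H q r b₁ b₂)
      = (1 - 2 * H) * b₁ - √(b₁ ^ 2 + 4 * H * (1 - H) * b₂ ^ 2 * q / r) := by
        linear_combination two_mul_one_sub_mul_optimalGain (q := q) (r := r) (b₁ := b₁) hH₁.ne hb₂
    _ < 0 := sub_neg.mpr hsqrt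

lemma optimalGain_quadratic (hH₀ : 0 ≤ H) (hH₁ : H < 1) (hq : 0 ≤ q) (hr : 0 < r)
    (hb₂ : b₂ ≠ 0) :
    r * ((1 - H) * (b₂ * optimalGain H q r b₁ b₂) ^ 2 + b₁ * (b₂ * optimalGain H q r b₁ b₂)) =
      H * b₂ ^ 2 * q := by
  have h1H : 0 < 1 - H := sub_pos.mpr hH₁
  have hsq : (2 * (1 - H) * (b₂ * optimalGain H q r b₁ b₂) + b₁) ^ 2 =
      b₁ ^ 2 + 4 * H * (1 - H) * b₂ ^ 2 * q / r := by
    rw [two_mul_one_sub_mul_optimalGain hH₁.ne hb₂, neg_add_rev, neg_add_cancel_right, neg_sq,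
      Real.sq_sqrt (by positivity)]
  refine mul_left_cancel₀ (mul_ne_zero four_ne_zero h1H.ne') ?_
  linear_combination r * hsq + 4 * H * (1 - H) * b₂ ^ 2 * mul_div_cancel₀ q hr.ne'

theorem stmt_0_general (hH₀ : 0 < H) (hH₁ : H < 1) (hq : 0 < q) (hr : 0 < r) (hb₂ : b₂ ≠ 0) :
    b₁ + b₂ * optimalGain H q r b₁ b₂ < 0 ∧
    IsMinOn (ergodicCost H q r b₁ b₂) {K | b₁ + b₂ * K < 0} (optimalGain H q r b₁ b₂) := by
  have hstable := optimalGain_stabilizing (b₁ := b₁) hH₀ hH₁ hq hr hb₂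
  refine ⟨hstable, fun K hK => ?_⟩
  set s := -(b₁ + b₂ * optimalGain H q r b₁ b₂) with hs
  have hnonneg : 0 ≤ b₂ ^ 2 * q + r * b₁ ^ 2 + 2 * r * b₁ * s + r * s ^ 2 := by
    have : 0 ≤ b₂ ^ 2 * q + r * (b₁ + s) ^ 2 := by positivity
    linear_combination this
  have hcrit : s * (2 * r * b₁ + 2 * r * s) =
      2 * H * (b₂ ^ 2 * q + r * b₁ ^ 2 + 2 * r * b₁ * s + r * s ^ 2) := by
    rw [hs]
    linear_combination 2 * optimalGain_quadratic (b₁ := b₁) hH₀.le hH₁ hq.le hr hb₂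
  have hmin := isMinOn_quadratic_div_rpow (by positivity) (by linarith) (by positivity) hr.le
    (neg_pos.mpr hstable) hnonneg hcrit (mem_Ioi.mpr (neg_pos.mpr hK))
  change ergodicCost H q r b₁ b₂ (optimalGain H q r b₁ b₂) ≤ ergodicCost H q r b₁ b₂ K
  rw [ergodicCost_eq_mul_quadratic_div_rpow hb₂, ergodicCost_eq_mul_quadratic_div_rpow hb₂]
  exact mul_le_mul_of_nonneg_left hmin (by positivity)

end OptimalGain

/-- Explicit solution of the infinite-horizon linear-quadratic ergodic control problem
driven by a Rosenblatt process: the gain `Khat` is stabilizing and globally minimizes the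
ergodic cost `L` over the stabilizing set. -/
theorem stmt_0 (H q r b₁ b₂ : ℝ)
    (hH : 1/2 < H) (hH1 : H < 1) (hq : 0 < q) (hr : 0 < r) (hb₂ : b₂ ≠ 0) :
    let L : ℝ → ℝ := fun K =>
      Real.Gamma (2*H + 1) * (q + r * K^2) / (2 * (-(b₁ + b₂ * K)) ^ (2*H));
    let Khat : ℝ := -(b₁ + Real.sqrt (b₁^2 + 4*H*(1-H) * b₂^2 * q / r)) / (2 * b₂ * (1-H));
    b₁ + b₂ * Khat < 0 ∧
    (∀ K : ℝ, b₁ + b₂ * K < 0 → L Khat ≤ L K) ∧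
    L Khat = Real.Gamma (2*H + 1) * (q + r * Khat^2) / (2 * (-(b₁ + b₂ * Khat)) ^ (2*H)) := by
  obtain ⟨hstable, hmin⟩ := stmt_0_general (b₁ := b₁) (by linarith : 0 < H) hH1 hq hr hb₂
  exact ⟨hstable, fun _ hK => hmin hK, rfl⟩
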